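/- Let K ≥ 2 be an integer, N > 0 a real number, and let μ : [0,∞) → ℝ be differentiable and satisfy μ'(t) = K / ( N·( exp(μ(t)) + (K−1) ) ) for all t ≥ 0, with μ(0) < 0. Define the initial reward standard deviation σ := sqrt( 4(K−1) / ( exp(μ(0)) + 2(K−1) + (K−1)²·exp(−μ(0)) ) ). If t* ≥ 0 satisfies μ(t*) = 0, then t* < N/K + (N(K−1)/K)·ln( 4 / ((K−1)·σ²) ); in particular, the time until correct classification under supervised finetuning grows at most logarithmically in 1/σ. -/

import Mathlib

/-!
Separating variables in the gradient flow shows that `exp μ + (K - 1) μ` grows linearly in time with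
slope `K / N`, so the time to reach `μ = 0` is exactly `N / K * (1 - exp (μ 0) - (K - 1) * μ 0)`.
It remains to bound `-μ 0` by the reward standard deviation. If `p` is the initial probability of
the correct label, then `σ ^ 2 = 4 * p * (1 - p)`, while the odds of `p` are `exp (μ 0) / (K - 1)`;
hence `exp (-μ 0) = (1 - p) / ((K - 1) * p) < 1 / ((K - 1) * p * (1 - p)) = 4 / ((K - 1) * σ ^ 2)`.
-/

open Real Set

theorem comp_eq_add_mul_of_hasDerivWithinAt_div {a b r : ℝ} {y G g : ℝ → ℝ}
    (hy : ∀ t ∈ Icc a b, HasDerivWithinAt y (r / g (y t)) (Icc a b) t)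
    (hG : ∀ t ∈ Icc a b, HasDerivAt G (g (y t)) (y t))
    (hg : ∀ t ∈ Icc a b, g (y t) ≠ 0) :
    ∀ t ∈ Icc a b, G (y t) = G (y a) + r * (t - a) := by
  have hleft : ∀ t ∈ Icc a b, HasDerivWithinAt (fun s ↦ G (y s)) r (Icc a b) t := fun t ht ↦
    ((hG t ht).comp_hasDerivWithinAt t (hy t ht)).congr_deriv (mul_div_cancel₀ r (hg t ht))
  have hright : ∀ t, HasDerivWithinAt (fun s ↦ G (y a) + r * (s - a)) r (Icc a b) t := fun t ↦ by
    simpa using ((((hasDerivAt_id t).sub_const a).const_mul r).const_add (G (y a))).hasDerivWithinAt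
  refine eq_of_derivWithin_eq (fun t ht ↦ (hleft t ht).differentiableWithinAt)
    (fun t _ ↦ (hright t).differentiableWithinAt) (fun t ht ↦ ?_) (by simp)
  have hunique := uniqueDiffOn_Icc (ht.1.trans_lt ht.2) t (Ico_subset_Icc_self ht)
  rw [(hleft t (Ico_subset_Icc_self ht)).derivWithin hunique, (hright t).derivWithin hunique]

theorem exp_add_sub_one_pos {K : ℝ} (hK : 1 ≤ K) (x : ℝ) : 0 < exp x + (K - 1) :=
  add_pos_of_pos_of_nonneg (exp_pos x) (sub_nonneg.mpr hK)

theorem exp_add_mul_eq_of_logitGap_flow {K N T : ℝ} (hK : 1 ≤ K) {μ : ℝ → ℝ}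
    (hode : ∀ t ∈ Icc 0 T, HasDerivWithinAt μ (K / (N * (exp (μ t) + (K - 1)))) (Icc 0 T) t) :
    ∀ t ∈ Icc 0 T, exp (μ t) + (K - 1) * μ t = exp (μ 0) + (K - 1) * μ 0 + K / N * t := by
  have hprimitive (x : ℝ) : HasDerivAt (fun x ↦ exp x + (K - 1) * x) (exp x + (K - 1)) x := by
    simpa using (hasDerivAt_exp x).fun_add ((hasDerivAt_id x).const_mul (K - 1))
  have hseparated (t : ℝ) (ht : t ∈ Icc 0 T) :
      exp (μ t) + (K - 1) * μ t = exp (μ 0) + (K - 1) * μ 0 + K / N * (t - 0) :=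
    comp_eq_add_mul_of_hasDerivWithinAt_div (g := fun x ↦ exp x + (K - 1))
      (by simpa only [div_div] using hode) (fun t _ ↦ hprimitive (μ t))
      (fun t _ ↦ (exp_add_sub_one_pos hK (μ t)).ne') t ht
  simpa only [sub_zero] using hseparated

theorem logitGap_hitting_time_eq {K N T : ℝ} (hK : 1 ≤ K) (hN : N ≠ 0) {μ : ℝ → ℝ}
    (hode : ∀ t ∈ Icc 0 T, HasDerivWithinAt μ (K / (N * (exp (μ t) + (K - 1)))) (Icc 0 T) t)
    (hT : 0 ≤ T) (hzero : μ T = 0) :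
    T = N / K * (1 - exp (μ 0) - (K - 1) * μ 0) := by
  have hK0 : K ≠ 0 := by linarith
  have hintegral := exp_add_mul_eq_of_logitGap_flow hK hode T (right_mem_Icc.mpr hT)
  rw [hzero, exp_zero, mul_zero, add_zero] at hintegral
  calc T = N / K * (K / N * T) := by field_simp
    _ = N / K * (1 - exp (μ 0) - (K - 1) * μ 0) := by
        congr 1
        linarith

/-- The softmax probability of the correct label among `K` labels when its logit exceeds each of
the others by `m`. The number of labels is allowed to be real. -/
noncomputable def correctProb (K m : ℝ) : ℝ :=
  exp m / (exp m + (K - 1))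

/-- The standard deviation, under the softmax model with logit gap `m`, of the reward that is `1` on
the correct label and `-1` on the others. The reward has second moment `1` and mean `2 * p - 1`,
where `p = correctProb K m`, hence variance `4 * p * (1 - p)`. -/
noncomputable def rewardStd (K m : ℝ) : ℝ :=
  √(4 * correctProb K m * (1 - correctProb K m))

section

variable {K : ℝ}

theorem correctProb_pos (hK : 1 ≤ K) (m : ℝ) : 0 < correctProb K m :=
  div_pos (exp_pos m) (exp_add_sub_one_pos hK m)

theorem one_sub_correctProb (hK : 1 ≤ K) (m : ℝ) :
    1 - correctProb K m = (K - 1) / (exp m + (K - 1)) := by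
  rw [correctProb, one_sub_div (exp_add_sub_one_pos hK m).ne', add_sub_cancel_left]

theorem correctProb_le_one (hK : 1 ≤ K) (m : ℝ) : correctProb K m ≤ 1 := by
  rw [← sub_nonneg, one_sub_correctProb hK]
  exact div_nonneg (sub_nonneg.mpr hK) (exp_add_sub_one_pos hK m).le

theorem rewardStd_sq (hK : 1 ≤ K) (m : ℝ) :
    rewardStd K m ^ 2 = 4 * correctProb K m * (1 - correctProb K m) :=
  sq_sqrt (mul_nonneg (mul_nonneg zero_le_four (correctProb_pos hK m).le)
    (sub_nonneg.mpr (correctProb_le_one hK m)))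

theorem rewardStd_eq_sqrt_div_exp (hK : 1 ≤ K) (m : ℝ) :
    rewardStd K m = √(4 * (K - 1) / (exp m + 2 * (K - 1) + (K - 1) ^ 2 * exp (-m))) := by
  have hsum : exp m + (K - 1) ≠ 0 := (exp_add_sub_one_pos hK m).ne'
  have hdenom : exp m + 2 * (K - 1) + (K - 1) ^ 2 * exp (-m) = (exp m + (K - 1)) ^ 2 / exp m := by
    rw [exp_neg]
    field_simp
    ring
  rw [rewardStd, one_sub_correctProb hK, correctProb, hdenom]
  congr 1
  field_simp

theorem correctProb_lt_one (hK : 1 < K) (m : ℝ) : correctProb K m < 1 := by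
  rw [← sub_pos, one_sub_correctProb hK.le]
  exact div_pos (sub_pos.mpr hK) (exp_add_sub_one_pos hK.le m)

theorem exp_neg_eq_one_sub_correctProb_div (hK : 1 < K) (m : ℝ) :
    exp (-m) = (1 - correctProb K m) / ((K - 1) * correctProb K m) := by
  have hK1 : K - 1 ≠ 0 := (sub_pos.mpr hK).ne'
  have hsum : exp m + (K - 1) ≠ 0 := (exp_add_sub_one_pos hK.le m).ne'
  rw [one_sub_correctProb hK.le, correctProb, exp_neg]
  field_simp

theorem exp_neg_lt_four_div_rewardStd_sq (hK : 1 < K) (m : ℝ) :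
    exp (-m) < 4 / ((K - 1) * rewardStd K m ^ 2) := by
  have hK1 : 0 < K - 1 := sub_pos.mpr hK
  have hp : 0 < correctProb K m := correctProb_pos hK.le m
  have hq : 0 < 1 - correctProb K m := sub_pos.mpr (correctProb_lt_one hK m)
  have hq1 : 1 - correctProb K m < 1 := sub_lt_self 1 hp
  calc exp (-m) = (1 - correctProb K m) / ((K - 1) * correctProb K m) :=
        exp_neg_eq_one_sub_correctProb_div hK m
    _ < 1 / (1 - correctProb K m) / ((K - 1) * correctProb K m) := by
        gcongr
        exact hq1.trans (one_lt_one_div hq hq1)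
    _ = 4 / ((K - 1) * rewardStd K m ^ 2) := by
        rw [rewardStd_sq hK.le]
        field_simp

theorem neg_lt_log_four_div_rewardStd_sq (hK : 1 < K) (m : ℝ) :
    -m < log (4 / ((K - 1) * rewardStd K m ^ 2)) :=
  (lt_log_iff_exp_lt ((exp_pos _).trans (exp_neg_lt_four_div_rewardStd_sq hK m))).mpr
    (exp_neg_lt_four_div_rewardStd_sq hK m)

end

theorem sft_time_upper_bound_in_reward_std_general {K N T : ℝ} (hK : 1 < K) (hN : 0 < N)
    {μ : ℝ → ℝ}
    (hode : ∀ t ∈ Icc 0 T, HasDerivWithinAt μ (K / (N * (exp (μ t) + (K - 1)))) (Icc 0 T) t)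
    (hT : 0 ≤ T) (hzero : μ T = 0) :
    T < N / K + N * (K - 1) / K * log (4 / ((K - 1) * rewardStd K (μ 0) ^ 2)) := by
  have hK1 : 0 < K - 1 := sub_pos.mpr hK
  have hNK : 0 < N / K := div_pos hN (one_pos.trans hK)
  have hgap := mul_lt_mul_of_pos_left (neg_lt_log_four_div_rewardStd_sq hK (μ 0)) hK1
  calc T = N / K * (1 - exp (μ 0) - (K - 1) * μ 0) :=
        logitGap_hitting_time_eq hK.le hN.ne' hode hT hzero
    _ < N / K * (1 + (K - 1) * log (4 / ((K - 1) * rewardStd K (μ 0) ^ 2))) :=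
        mul_lt_mul_of_pos_left (by linarith [exp_pos (μ 0)]) hNK
    _ = N / K + N * (K - 1) / K * log (4 / ((K - 1) * rewardStd K (μ 0) ^ 2)) := by ring

/-- under the reduced supervised finetuning gradient-flow dynamics, the
time until correct classification is upper bounded logarithmically in `1/σ`, where `σ` is the
initial reward standard deviation. -/
theorem sft_time_upper_bound_in_reward_std
    (K : ℕ) (hK : 2 ≤ K) (N : ℝ) (hN : 0 < N) (μ : ℝ → ℝ)
    (hode : ∀ t : ℝ, 0 ≤ t →
      HasDerivAt μ ((K : ℝ) / (N * (Real.exp (μ t) + ((K : ℝ) - 1)))) t)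
    (hμ0 : μ 0 < 0)
    (σ : ℝ)
    (hσ : σ = Real.sqrt (4 * ((K : ℝ) - 1) /
      (Real.exp (μ 0) + 2 * ((K : ℝ) - 1) + ((K : ℝ) - 1) ^ 2 * Real.exp (-μ 0))))
    (tstar : ℝ) (htstar : 0 ≤ tstar) (hzero : μ tstar = 0) :
    tstar < N / K + (N * ((K : ℝ) - 1) / K) * Real.log (4 / (((K : ℝ) - 1) * σ ^ 2)) := by
  rw [hσ, ← rewardStd_eq_sqrt_div_exp (Nat.one_lt_cast.mpr hK).le]
  exact sft_time_upper_bound_in_reward_std_general (Nat.one_lt_cast.mpr hK) hN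
    (fun t ht ↦ (hode t ht.1).hasDerivWithinAt) htstar hzero
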